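/- Let e : T[p..q] = T[p'..q'] and e_i : T[p_i..q_i] = T[p'_i..q'_i] (for 1 ≤ i ≤ m, with m ≥ 1) be substring equations that all have the same shift, and assume p ≤ p_i and q_i ≤ q for all 1 ≤ i ≤ m. Let S_1,…,S_m be non-negative integers such that p_{i+1} + S_{i+1} ≤ q_i − S_i + 1 for all 1 ≤ i < m. Then: (a) if T satisfies e, then T satisfies every e_i; (b) if T satisfies each e_i with shortage S_i, then T satisfies e with shortage S = max(p_1 − p + S_1, q − q_m + S_m). -/

import Mathlib

/-! Part (a) is restriction to a subinterval. For part (b), shortage `S_i` leaves the core interval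
`[p_i + S_i, q_i - S_i]`, on which `e_i` gives `T k = T (k + d)`. The chain condition says that
consecutive cores leave no gap, so together they cover `[p_1 + S_1, q_m - S_m]`
(`exists_core_mem`), and the stated shortage cuts the range of `e` down to a subset of it. -/

/-- A substring equation `T[p..q] = T[p'..q']`. -/
structure SubEq where
  p : ℤ
  q : ℤ
  p' : ℤ
  q' : ℤ
deriving DecidableEq

/-- The equation is well-formed: both fragments have the same length. -/
def SubEq.valid (e : SubEq) : Prop := e.q - e.p = e.q' - e.p'

/-- The (oriented) shift of the equation. -/
def SubEq.shift (e : SubEq) : ℤ := e.p' - e.p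

/-- The length of the equation. -/
def SubEq.len (e : SubEq) : ℤ := e.q - e.p + 1

/-- The equation is on a text of length `n`. -/
def SubEq.onText (e : SubEq) (n : ℤ) : Prop :=
  1 ≤ e.p ∧ 1 ≤ e.p' ∧ e.q ≤ n ∧ e.q' ≤ n

/-- `T` satisfies the equation `e` with shortage `S`. -/
def SatS {α : Type*} (T : ℤ → α) (e : SubEq) (S : ℤ) : Prop :=
  ∀ k : ℤ, e.p + S ≤ k → k ≤ e.q - S → T k = T (k + e.shift)

/-- Integer intervals `[a i, b i]`, `i ≤ n`, without gaps between consecutive ones cover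
`[a 0, b n]`. Some of the intervals may be empty, and `a`, `b` need not be monotone. -/
theorem exists_core_mem (a b : ℕ → ℤ) (k : ℤ) (n : ℕ)
    (hab : ∀ i < n, a (i + 1) ≤ b i + 1) (h₀ : a 0 ≤ k) (hn : k ≤ b n) :
    ∃ i ≤ n, a i ≤ k ∧ k ≤ b i := by
  induction n with
  | zero => exact ⟨0, le_rfl, h₀, hn⟩
  | succ n ih =>
    -- If `k > b n`, then `k ≥ a (n + 1)` because there is no gap.
    by_cases hk : k ≤ b n
    · obtain ⟨i, hi, h⟩ := ih (fun i hi => hab i (by omega)) hk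
      exact ⟨i, by omega, h⟩
    · have := hab n (by omega)
      exact ⟨n + 1, le_rfl, by omega, hn⟩

/-- Fact 10: splitting one substring equation into equations with the same shift.
(a) if `e` is satisfied then every `e_i` is; (b) if each `e_i` is satisfied with
shortage `S_i` then `e` is satisfied with shortage
`max(p_1 - p + S_1, q - q_m + S_m)`. -/
theorem subEq_split {α : Type*} (T : ℤ → α) (m : ℕ) (hm : 1 ≤ m)
    (e : SubEq) (f : ℕ → SubEq) (S : ℕ → ℤ)
    (he : e.valid) (hf : ∀ i < m, (f i).valid)
    (hshift : ∀ i < m, (f i).shift = e.shift)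
    (hp : ∀ i < m, e.p ≤ (f i).p)
    (hq : ∀ i < m, (f i).q ≤ e.q)
    (hS : ∀ i < m, 0 ≤ S i)
    (hchain : ∀ i : ℕ, i + 1 < m → (f (i + 1)).p + S (i + 1) ≤ (f i).q - S i + 1) :
    (SatS T e 0 → ∀ i < m, SatS T (f i) 0) ∧
    ((∀ i < m, SatS T (f i) (S i)) →
      SatS T e (max ((f 0).p - e.p + S 0) (e.q - (f (m - 1)).q + S (m - 1)))) := by
  constructor
  · intro h i hi k hk₁ hk₂
    have hpi := hp i hi
    have hqi := hq i hi
    rw [hshift i hi]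
    exact h k (by omega) (by omega)
  · intro h k hk₁ hk₂
    have hl := le_max_left ((f 0).p - e.p + S 0) (e.q - (f (m - 1)).q + S (m - 1))
    have hr := le_max_right ((f 0).p - e.p + S 0) (e.q - (f (m - 1)).q + S (m - 1))
    obtain ⟨i, hi, h₁, h₂⟩ := exists_core_mem (fun i => (f i).p + S i) (fun i => (f i).q - S i)
      k (m - 1) (fun i hi => by have := hchain i (by omega); omega)
      (by omega) (by omega)
    have him : i < m := by omega
    rw [← hshift i him]
    exact h i him k h₁ h₂
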